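/- Let G be a connected simple graph on Fin N with N ≥ 2, K > 0, ω : Fin N → ℝ, and let θ : Fin N → ℝ be a completely degenerate equilibrium of the non-identical Kuramoto system with coupling K and frequencies ω. Then θ is neither a local minimum nor a local maximum of the energy E : (Fin N → ℝ) → ℝ, E(φ) = −∑_h ω h · φ h + K·(1/2)·∑_{p,q} a(p,q)·(1 − cos(φ p − φ q)). -/

import Mathlib

open Real

open Classical in
/-- Adjacency indicator: `1` if `j` and `k` are adjacent in `G`, `0` otherwise. -/
noncomputable def adjInd {V : Type*} (G : SimpleGraph V) (j k : V) : ℝ :=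
  if G.Adj j k then 1 else 0

/-- A completely degenerate equilibrium of the identical Kuramoto system on `G`. -/
def IsCDE {V : Type*} [Fintype V] (G : SimpleGraph V) (θ : V → ℝ) : Prop :=
  (∀ k, ∑ j, adjInd G j k * Real.sin (θ j - θ k) = 0) ∧
  (∀ j k, G.Adj j k → Real.cos (θ j - θ k) = 0)

/-- A completely degenerate equilibrium of the non-identical Kuramoto system with coupling
`K` and intrinsic frequencies `ω`. -/
def IsCDENonId {N : ℕ} (G : SimpleGraph (Fin N)) (K : ℝ) (ω θ : Fin N → ℝ) : Prop :=
  (∀ k, ω k + K * ∑ j, adjInd G j k * Real.sin (θ j - θ k) = 0) ∧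
  (∀ j k, G.Adj j k → Real.cos (θ j - θ k) = 0)

/-- The energy of the non-identical Kuramoto system (double sum over ordered pairs,
halved). -/
noncomputable def energyNonId {N : ℕ} (G : SimpleGraph (Fin N)) (K : ℝ) (ω : Fin N → ℝ)
    (φ : Fin N → ℝ) : ℝ :=
  - ∑ h, ω h * φ h + K * ((1 / 2) * ∑ p, ∑ q, adjInd G p q * (1 - Real.cos (φ p - φ q)))

open Filter Topology in
theorem aux_const {N : ℕ} (G : SimpleGraph (Fin N)) (K : ℝ) (ω θ : Fin N → ℝ)
    (hc : ∀ j k, G.Adj j k → Real.cos (θ j - θ k) = 0)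
    (h : IsLocalMin (energyNonId G K ω) θ ∨ IsLocalMax (energyNonId G K ω) θ)
    (e : Fin N → ℝ) :
    ∀ᶠ t : ℝ in 𝓝 0, energyNonId G K ω (fun i => θ i + t * e i) = energyNonId G K ω θ := by
  have odd : ∀ t : ℝ, energyNonId G K ω (fun i => θ i + t * e i)
      + energyNonId G K ω (fun i => θ i + (-t) * e i) = 2 * energyNonId G K ω θ := by
    intro t
    have h1 : ∑ h, ω h * (θ h + t * e h) + ∑ h, ω h * (θ h + (-t) * e h)
        = 2 * ∑ h, ω h * θ h := by
      rw [← Finset.sum_add_distrib, Finset.mul_sum]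
      exact Finset.sum_congr rfl fun i _ => by ring
    have h2 : ∑ p, ∑ q, adjInd G p q * (1 - Real.cos ((θ p + t * e p) - (θ q + t * e q)))
        + ∑ p, ∑ q, adjInd G p q * (1 - Real.cos ((θ p + (-t) * e p) - (θ q + (-t) * e q)))
        = 2 * ∑ p, ∑ q, adjInd G p q * (1 - Real.cos (θ p - θ q)) := by
      rw [← Finset.sum_add_distrib, Finset.mul_sum]
      refine Finset.sum_congr rfl fun p _ => ?_
      rw [← Finset.sum_add_distrib, Finset.mul_sum]
      refine Finset.sum_congr rfl fun q _ => ?_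
      by_cases ha : G.Adj p q
      · have := hc p q ha
        rw [show (θ p + t * e p) - (θ q + t * e q) = (θ p - θ q) + t * (e p - e q) by ring,
          show (θ p + (-t) * e p) - (θ q + (-t) * e q) = (θ p - θ q) - t * (e p - e q) by ring,
          Real.cos_add, Real.cos_sub (θ p - θ q), this]
        ring
      · simp [adjInd, ha]
    simp only [energyNonId]
    linear_combination (-1) * h1 + K * (1 / 2) * h2
  have ct : Tendsto (fun t : ℝ => (fun i => θ i + t * e i)) (𝓝 0) (𝓝 θ) := by
    have : Continuous (fun t : ℝ => (fun i => θ i + t * e i)) := by fun_prop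
    simpa using this.tendsto 0
  have ct' : Tendsto (fun t : ℝ => (fun i => θ i + (-t) * e i)) (𝓝 0) (𝓝 θ) := by
    have : Continuous (fun t : ℝ => (fun i => θ i + (-t) * e i)) := by fun_prop
    simpa using this.tendsto 0
  rcases h with h | h
  · filter_upwards [ct.eventually h, ct'.eventually h] with t h1 h2
    linarith [odd t]
  · filter_upwards [ct.eventually h, ct'.eventually h] with t h1 h2
    linarith [odd t]

open Filter Topology in
theorem aux_main {N : ℕ} (hN : 2 ≤ N) (G : SimpleGraph (Fin N)) (hG : G.Connected)
    (K : ℝ) (hK : 0 < K) (ω θ : Fin N → ℝ) 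
    (hc : ∀ j k, G.Adj j k → Real.cos (θ j - θ k) = 0)
    (h : IsLocalMin (energyNonId G K ω) θ ∨ IsLocalMax (energyNonId G K ω) θ) : False := by
  obtain ⟨u, v, huv⟩ : ∃ u v, G.Adj u v := by
    haveI : Nontrivial (Fin N) := Fin.nontrivial_iff_two_le.2 hN
    obtain ⟨v, hv⟩ := hG.preconnected.exists_adj_of_nontrivial ⟨0, by omega⟩
    exact ⟨_, v, hv⟩
  have hne : u ≠ v := huv.ne
  let f : Fin N → ℝ := Pi.single u 1
  let g : Fin N → ℝ := Pi.single v 1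
  have c1 := aux_const G K ω θ hc h (fun i => f i - g i)
  have c2 := aux_const G K ω θ hc h f
  have c3 := aux_const G K ω θ hc h (fun i => - g i)
  have c4 : ∀ᶠ t : ℝ in 𝓝 0, t < 1 := eventually_lt_nhds one_pos
  have c5 : ∀ᶠ t : ℝ in 𝓝[>] 0, 0 < t := eventually_mem_nhdsWithin
  obtain ⟨t, ⟨⟨⟨⟨e1, e2⟩, e3⟩, e4⟩, e5⟩⟩ :=
    ((((c1.and c2).and c3).and c4).filter_mono nhdsWithin_le_nhds |>.and c5).exists
  set s := Real.sin (θ u - θ v) with hs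
  have hcu := hc u v huv
  have hs0 : s ≠ 0 := by
    intro h0
    have := Real.sin_sq_add_cos_sq (θ u - θ v)
    rw [← hs, h0, hcu] at this
    norm_num at this
  set W := s * (Real.sin (2 * t) - 2 * Real.sin t) with hW
  have hW0 : W ≠ 0 := by
    apply mul_ne_zero hs0
    have p1 : 0 < Real.sin t := Real.sin_pos_of_pos_of_lt_pi e5 (by linarith [Real.pi_gt_three])
    have p2 : Real.cos t < 1 := by
      have := Real.sin_sq_add_cos_sq t
      nlinarith
    rw [Real.sin_two_mul]
    nlinarith
  have L : ∑ h, ω h * (θ h + t * (f h - g h)) - ∑ h, ω h * (θ h + t * f h)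
      - ∑ h, ω h * (θ h + t * (- g h)) + ∑ h, ω h * θ h = 0 := by
    rw [← Finset.sum_sub_distrib, ← Finset.sum_sub_distrib, ← Finset.sum_add_distrib]
    exact Finset.sum_eq_zero fun i _ => by ring
  have Q : ∑ p, ∑ q, adjInd G p q * (1 - Real.cos ((θ p + t * (f p - g p)) - (θ q + t * (f q - g q))))
      - ∑ p, ∑ q, adjInd G p q * (1 - Real.cos ((θ p + t * f p) - (θ q + t * f q)))
      - ∑ p, ∑ q, adjInd G p q * (1 - Real.cos ((θ p + t * (- g p)) - (θ q + t * (- g q))))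
      + ∑ p, ∑ q, adjInd G p q * (1 - Real.cos (θ p - θ q))
      = ∑ p, ∑ q, W * (f p * g q + g p * f q) := by
    simp only [← Finset.sum_sub_distrib, ← Finset.sum_add_distrib]
    refine Finset.sum_congr rfl fun p _ => Finset.sum_congr rfl fun q _ => ?_
    have fu : f u = 1 := by simp [f]
    have fv : f v = 0 := by simp [f, hne.symm]
    have gu : g u = 0 := by simp [g, hne]
    have gv : g v = 1 := by simp [g]
    have fo : ∀ i, i ≠ u → f i = 0 := fun i hi => by simp [f, hi]
    have go : ∀ i, i ≠ v → g i = 0 := fun i hi => by simp [g, hi]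
    have auv : adjInd G u v = 1 := by simp [adjInd, huv]
    have avu : adjInd G v u = 1 := by simp [adjInd, huv.symm]
    have A : ∀ x, Real.cos (θ u - θ v + x) = - s * Real.sin x := by
      intro x; rw [Real.cos_add, hcu, ← hs]; ring
    have B : ∀ x, Real.cos (θ v - θ u - x) = - s * Real.sin x := by
      intro x; rw [← A x, ← Real.cos_neg]; ring_nf
    have A1 := A t
    have A2 := A (2 * t)
    have B1 := B t
    have B2 := B (2 * t)
    have hcv := hc v u huv.symm
    by_cases pu : p = u
    · subst pu
      by_cases qv : q = v
      · subst qv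
        rw [auv, fu, fv, gu, gv,
          show θ p + t * (1 - 0) - (θ q + t * (0 - 1)) = θ p - θ q + 2 * t by ring,
          show θ p + t * 1 - (θ q + t * 0) = θ p - θ q + t by ring,
          show θ p + t * (-0) - (θ q + t * (-1)) = θ p - θ q + t by ring, A1, A2, hcu, hW]
        ring
      · by_cases qu : q = p
        · subst qu; rw [fu, gu]; simp
        · rw [fo q qu, go q qv, fu, gu]; ring_nf
    · by_cases pv : p = v
      · subst pv
        by_cases qu : q = u
        · subst qu
          rw [avu, fu, fv, gu, gv,
            show θ p + t * (0 - 1) - (θ q + t * (1 - 0)) = θ p - θ q - 2 * t by ring,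
            show θ p + t * 0 - (θ q + t * 1) = θ p - θ q - t by ring,
            show θ p + t * (-1) - (θ q + t * (-0)) = θ p - θ q - t by ring, B1, B2, hcv, hW]
          ring
        · rw [fo q qu, fv]; ring_nf
      · rw [fo p pu, go p pv]
        by_cases qu : q = u
        · subst qu; rw [gu]; ring_nf
        · rw [fo q qu]; ring_nf
  have R : ∑ p, ∑ q, W * (f p * g q + g p * f q) = 2 * W := by
    have sf : ∑ p, f p = 1 := by simp [f]
    have sg : ∑ p, g p = 1 := by simp [g]
    simp only [← Finset.mul_sum, Finset.sum_add_distrib, ← Finset.sum_mul, sf, sg]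
    ring
  simp only [energyNonId] at e1 e2 e3
  apply hW0
  have : K * W = 0 := by
    linear_combination e1 - e2 - e3 + L - K * (1/2) * Q - K * (1/2) * R
  exact (mul_eq_zero.1 this).resolve_left hK.ne'

/-- on a connected graph with at least two vertices, a completely degenerate
equilibrium of the non-identical system (coupling `K > 0`) is neither a local minimum nor a
local maximum of the energy. -/
theorem stmt17 {N : ℕ} (hN : 2 ≤ N) (G : SimpleGraph (Fin N)) (hG : G.Connected)
    (K : ℝ) (hK : 0 < K) (ω θ : Fin N → ℝ) (hθ : IsCDENonId G K ω θ) :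
    ¬ IsLocalMin (energyNonId G K ω) θ ∧ ¬ IsLocalMax (energyNonId G K ω) θ :=
  ⟨fun h => aux_main hN G hG K hK ω θ hθ.2 (Or.inl h),
    fun h => aux_main hN G hG K hK ω θ hθ.2 (Or.inr h)⟩
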